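/- Let F(T) ∈ ℤ[T] be a nonconstant polynomial of degree D with no multiple roots. There is a constant C (depending only on D) such that for every odd prime ℓ not dividing the leading coefficient of F and not dividing the discriminant of T·F(T) (the discriminant of F if F(0) = 0), and every integer w with gcd(w, ℓ) = 1, the quantity V_ℓ = #{(v₁, v₂) mod ℓ : gcd(v₁·v₂, ℓ) = 1 and F(v₁)·F(v₂) ≡ w (mod ℓ)} satisfies φ(ℓ)·V_ℓ ≤ φ(ℓ)²·(1 + C/√ℓ), i.e., V_ℓ ≤ (ℓ − 1)·(1 + C/√ℓ). -/

import Mathlib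

open Polynomial

namespace Stepanov
open Polynomial.Bivariate

section basics
variable {K : Type*} [Field K]

lemma coeff_coeff_swap (f : K[X][Y]) (i j : ℕ) :
    ((swap f).coeff i).coeff j = (f.coeff j).coeff i := by
  induction f using Polynomial.induction_on' with
  | add p q hp hq => simp only [map_add, coeff_add, hp, hq]
  | monomial n g =>
    induction g using Polynomial.induction_on' with
    | add p q hp hq => simp only [map_add, coeff_add, hp, hq]
    | monomial m r =>
      rw [swap_monomial_monomial]
      simp only [coeff_monomial]
      split_ifs <;> simp_all [coeff_monomial]

/-- Polynomials of bidegree at most `(a, b)`. -/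
noncomputable def P (K : Type*) [CommRing K] (a b : ℕ) : Submodule K K[X][Y] where
  carrier := {f | ∀ i j, (a < i ∨ b < j) → (f.coeff j).coeff i = 0}
  zero_mem' := by intro i j _; simp
  add_mem' := by
    intro f g hf hg i j h
    simp [hf i j h, hg i j h]
  smul_mem' := by
    intro c f hf i j h
    simp [hf i j h]

lemma mem_P {a b : ℕ} {f : K[X][Y]} :
    f ∈ P K a b ↔ ∀ i j, (a < i ∨ b < j) → (f.coeff j).coeff i = 0 := Iff.rfl

lemma swap_mem_P {a b : ℕ} {f : K[X][Y]} (h : f ∈ P K a b) : swap f ∈ P K b a := by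
  intro i j hij
  rw [coeff_coeff_swap]
  exact h _ _ hij.symm

lemma mem_P_iff {a b : ℕ} {f : K[X][Y]} :
    f ∈ P K a b ↔ f.natDegree ≤ b ∧ (swap f).natDegree ≤ a := by
  constructor
  · intro h
    refine ⟨natDegree_le_iff_coeff_eq_zero.2 ?_, natDegree_le_iff_coeff_eq_zero.2 ?_⟩
    · intro j hj
      ext i
      simpa using h i j (Or.inr hj)
    · intro i hi
      ext j
      rw [coeff_coeff_swap]
      simpa using h i j (Or.inl hi)
  · rintro ⟨h1, h2⟩ i j hij
    rcases hij with hi | hj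
    · rw [← coeff_coeff_swap, coeff_eq_zero_of_natDegree_lt (lt_of_le_of_lt h2 hi), coeff_zero]
    · rw [coeff_eq_zero_of_natDegree_lt (lt_of_le_of_lt h1 hj), coeff_zero]

lemma mul_mem_P {a b c d : ℕ} {f g : K[X][Y]} (hf : f ∈ P K a b) (hg : g ∈ P K c d) :
    f * g ∈ P K (a + c) (b + d) := by
  rw [mem_P_iff] at *
  refine ⟨natDegree_mul_le_of_le hf.1 hg.1, ?_⟩
  rw [map_mul]
  exact natDegree_mul_le_of_le hf.2 hg.2

lemma pow_mem_P {a b : ℕ} {f : K[X][Y]} (hf : f ∈ P K a b) (n : ℕ) :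
    f ^ n ∈ P K (n * a) (n * b) := by
  rw [mem_P_iff] at *
  refine ⟨natDegree_pow_le_of_le n hf.1, ?_⟩
  rw [map_pow]
  exact natDegree_pow_le_of_le n hf.2

lemma P_mono {a b c d : ℕ} (h1 : a ≤ c) (h2 : b ≤ d) : P K a b ≤ P K c d := by
  intro f hf
  rw [mem_P_iff] at *
  exact ⟨hf.1.trans h2, hf.2.trans h1⟩

lemma C_mem_P {n : ℕ} {f : K[X]} (h : f.natDegree ≤ n) : (C f : K[X][Y]) ∈ P K n 0 := by
  rw [mem_P_iff, swap_C]
  exact ⟨by simp, natDegree_map_le.trans h⟩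

lemma map_C_mem_P {n : ℕ} {f : K[X]} (h : f.natDegree ≤ n) :
    (f.map C : K[X][Y]) ∈ P K 0 n := by
  rw [mem_P_iff, swap_map_C]
  exact ⟨natDegree_map_le.trans h, by simp⟩

lemma derivative_mem_P {a b : ℕ} {f : K[X][Y]} (h : f ∈ P K a b) : derivative f ∈ P K a b := by
  intro i j hij
  rw [coeff_derivative]
  have : (f.coeff (j+1)).coeff i = 0 := h _ _ (by omega)
  have h2 : ((j : K[X]) + 1) = C ((j : K) + 1) := by simp
  rw [h2, coeff_mul_C, this, zero_mul]

lemma swap_derivative_mem_P {a b : ℕ} {f : K[X][Y]} (h : f ∈ P K a b) :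
    swap (derivative (swap f)) ∈ P K a b :=
  swap_mem_P (derivative_mem_P (swap_mem_P h))

/-- coefficients of a polynomial of bounded bidegree -/
noncomputable def Pcoeff (K : Type*) [Field K] (a b : ℕ) :
    P K a b →ₗ[K] (Fin (b+1) × Fin (a+1) → K) where
  toFun f ji := ((f : K[X][Y]).coeff ji.1).coeff ji.2
  map_add' f g := by ext; simp
  map_smul' c f := by ext; simp

lemma Pcoeff_bij (a b : ℕ) : Function.Bijective (Pcoeff K a b) := by
  constructor
  · refine (injective_iff_map_eq_zero _).2 ?_
    rintro ⟨f, hf⟩ h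
    ext j i
    by_cases hij : a < i ∨ b < j
    · simpa using hf i j hij
    · push Not at hij
      have := congrFun h (⟨j, by omega⟩, ⟨i, by omega⟩)
      simpa [Pcoeff] using this
  · intro v
    refine ⟨⟨∑ ji : Fin (b+1) × Fin (a+1), monomial (ji.1 : ℕ) (monomial (ji.2 : ℕ) (v ji)), ?_⟩, ?_⟩
    · refine Submodule.sum_mem _ fun ji _ => ?_
      intro i j hij
      have h1 := ji.1.2
      have h2 := ji.2.2
      rw [coeff_monomial]
      split_ifs with h
      · rw [coeff_monomial, if_neg (by omega)]
      · simp
    · ext ⟨j, i⟩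
      simp only [Pcoeff, LinearMap.coe_mk, AddHom.coe_mk, finsetSum_coeff]
      rw [Finset.sum_eq_single (j, i)]
      · simp
      · rintro ⟨j', i'⟩ _ hne
        rw [coeff_monomial]
        split_ifs with h
        · rw [coeff_monomial, if_neg]
          intro h'
          exact hne (Prod.ext (Fin.ext h) (Fin.ext h'))
        · simp
      · simp

instance (a b : ℕ) : FiniteDimensional K (P K a b) :=
  (LinearEquiv.ofBijective _ (Pcoeff_bij (K := K) a b)).symm.finiteDimensional

lemma finrank_P (a b : ℕ) : Module.finrank K (P K a b) = (a + 1) * (b + 1) := by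
  rw [(LinearEquiv.ofBijective _ (Pcoeff_bij (K := K) a b)).finrank_eq]
  simp [mul_comm]

lemma exists_mem_P {ι : Type*} [Fintype ι] (g : ι → K[X][Y]) : ∃ L, ∀ i, g i ∈ P K L L := by
  refine ⟨∑ i, ((g i).natDegree + (swap (g i)).natDegree), fun i => mem_P_iff.2 ?_⟩
  have := Finset.single_le_sum (f := fun i => (g i).natDegree + (swap (g i)).natDegree)
    (fun _ _ => Nat.zero_le _) (Finset.mem_univ i)
  omega

/-- the Hamiltonian derivation -/
noncomputable def dl (F : K[X]) : K[X][Y] →ₗ[K] K[X][Y] where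
  toFun f := C F * (derivative F).map C * swap (derivative (swap f))
    - C (derivative F) * F.map C * derivative f
  map_add' f g := by simp only [map_add]; ring
  map_smul' c f := by
    simp only [map_smul, derivative_smul, RingHom.id_apply, mul_smul_comm, smul_sub]

lemma dl_apply (F : K[X]) (f : K[X][Y]) : dl F f = C F * (derivative F).map C * swap (derivative (swap f))
    - C (derivative F) * F.map C * derivative f := rfl

lemma dl_mul (F : K[X]) (f g : K[X][Y]) : dl F (f * g) = dl F f * g + f * dl F g := by
  simp only [dl_apply, map_mul, derivative_mul, map_add, swap_swap_apply]
  ring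

lemma dl_mem_P {F : K[X]} {D a b : ℕ} (hF : F.natDegree ≤ D) {f : K[X][Y]} (h : f ∈ P K a b) :
    dl F f ∈ P K (a + D) (b + D) := by
  have hF' : (derivative F).natDegree ≤ D := (natDegree_derivative_le F).trans (by omega)
  rw [dl_apply]
  refine Submodule.sub_mem _ ?_ ?_
  · refine P_mono ?_ ?_ (mul_mem_P (mul_mem_P (C_mem_P hF) (map_C_mem_P hF')) (swap_derivative_mem_P h)) <;> omega
  · refine P_mono ?_ ?_ (mul_mem_P (mul_mem_P (C_mem_P hF') (map_C_mem_P hF)) (derivative_mem_P h)) <;> omega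

lemma dl_iter_mem_P {F : K[X]} {D a b : ℕ} (hF : F.natDegree ≤ D) {f : K[X][Y]} (h : f ∈ P K a b)
    (r : ℕ) : (dl F)^[r] f ∈ P K (a + r * D) (b + r * D) := by
  induction r with
  | zero => simpa using h
  | succ r ih =>
    rw [Function.iterate_succ_apply']
    refine P_mono ?_ ?_ (dl_mem_P hF ih) <;> ring_nf <;> omega

lemma dl_C (F f : K[X]) : dl F (C f) = C F * (derivative F).map C * C (derivative f) := by
  rw [dl_apply, swap_C, derivative_map, swap_map_C]
  simp

lemma dl_map_C (F f : K[X]) : dl F (f.map C) = - (C (derivative F) * F.map C * (derivative f).map C) := by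
  rw [dl_apply, swap_map_C, derivative_map]
  simp

/-- the curve -/
noncomputable def G (F : K[X]) (w : K) : K[X][Y] := C F * F.map C - C (C w)

lemma dl_G (F : K[X]) (w : K) : dl F (G F w) = 0 := by
  have : dl F (C (C w)) = 0 := by rw [dl_C]; simp
  rw [G, map_sub, this, dl_mul, dl_C, dl_map_C]
  ring

lemma dl_iter_add (F : K[X]) (r : ℕ) (f g : K[X][Y]) :
    (dl F)^[r] (f + g) = (dl F)^[r] f + (dl F)^[r] g := by
  rw [← Module.End.coe_pow, map_add]

lemma dl_iter_mul_const (F : K[X]) (r : ℕ) (f g : K[X][Y]) (hg : dl F g = 0) :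
    (dl F)^[r] (f * g) = (dl F)^[r] f * g := by
  induction r generalizing f with
  | zero => rfl
  | succ r ih =>
    rw [Function.iterate_succ_apply, Function.iterate_succ_apply, dl_mul, hg, mul_zero, add_zero, ih]

lemma dl_pow_p (F : K[X]) (p : ℕ) [CharP K p] (g : K[X][Y]) : dl F (g ^ p) = 0 := by
  rw [dl_apply, map_pow, derivative_pow, derivative_pow]
  simp

/-- vanishing to order `M` at a point, in the sense of `dl` -/
def Van (F : K[X]) (M : ℕ) (v : K × K) (f : K[X][Y]) : Prop :=
  ∀ r < M, ((dl F)^[r] f).evalEval v.1 v.2 = 0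

lemma Van.mul_right {F : K[X]} {M : ℕ} {v : K × K} {f : K[X][Y]} (h : Van F M v f) (g : K[X][Y]) :
    Van F M v (f * g) := by
  induction M generalizing f g with
  | zero => intro r hr; omega
  | succ M ih =>
    intro r hr
    rcases r with _ | r
    · have := h 0 (by omega)
      simp only [Function.iterate_zero, id_eq] at this ⊢
      rw [evalEval_mul, this, zero_mul]
    · rw [Function.iterate_succ_apply, dl_mul, dl_iter_add, evalEval_add]
      rw [ih (f := dl F f) (fun s hs => by
          rw [← Function.iterate_succ_apply]; exact h _ (by omega)) g r (by omega),
        ih (f := f) (fun s hs => h s (by omega)) (dl F g) r (by omega), add_zero]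

lemma Van.mul_left {F : K[X]} {M : ℕ} {v : K × K} {f : K[X][Y]} (h : Van F M v f) (g : K[X][Y]) :
    Van F M v (g * f) := by
  rw [mul_comm]; exact h.mul_right g

lemma Van.add {F : K[X]} {M : ℕ} {v : K × K} {f g : K[X][Y]} (hf : Van F M v f) (hg : Van F M v g) :
    Van F M v (f + g) := by
  intro r hr
  rw [dl_iter_add, evalEval_add, hf r hr, hg r hr, add_zero]

/-- Products of vanishing -/
lemma Van.mul_succ {F : K[X]} {M : ℕ} {v : K × K} {f g : K[X][Y]} (hf : Van F M v f)
    (hg : g.evalEval v.1 v.2 = 0) : Van F (M+1) v (f * g) := by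
  induction M generalizing f g with
  | zero =>
    intro r hr
    obtain rfl : r = 0 := by omega
    simp [evalEval_mul, hg]
  | succ M ih =>
    intro r hr
    rcases r with _ | r
    · simp [evalEval_mul, hg]
    · rw [Function.iterate_succ_apply, dl_mul, dl_iter_add, evalEval_add]
      rw [ih (f := dl F f) (fun s hs => by
          rw [← Function.iterate_succ_apply]; exact hf _ (by omega)) hg r (by omega),
        hf.mul_right (dl F g) r (by omega), add_zero]

lemma Van.pow {F : K[X]} {v : K × K} {g : K[X][Y]} (hg : g.evalEval v.1 v.2 = 0) (M : ℕ) :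
    Van F M v (g ^ M) := by
  induction M with
  | zero => intro r hr; omega
  | succ M ih => rw [pow_succ]; exact ih.mul_succ hg

lemma Van.G_mul {F : K[X]} {w : K} {v : K × K} (hv : F.eval v.1 * F.eval v.2 = w) (M : ℕ)
    (g : K[X][Y]) : Van F M v (G F w * g) := by
  intro r _
  rw [mul_comm, dl_iter_mul_const _ _ _ _ (dl_G F w), evalEval_mul]
  have : (G F w).evalEval v.1 v.2 = 0 := by
    rw [G, evalEval_sub, evalEval_mul, evalEval_C, evalEval_map_C, evalEval_CC, hv, sub_self]
  rw [this, mul_zero]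

/-- exact order of a product with a uniformizer power -/
lemma eval_dl_pow {F : K[X]} {v : K × K} {t : K[X][Y]} (ht : t.evalEval v.1 v.2 = 0) (s : ℕ)
    (h : K[X][Y]) :
    ((dl F)^[s] (h * t ^ s)).evalEval v.1 v.2
      = (s.factorial : K) * h.evalEval v.1 v.2 * ((dl F t).evalEval v.1 v.2) ^ s := by
  induction s generalizing h with
  | zero => simp
  | succ s ih =>
    have hpow : dl F (t ^ (s+1)) = (s + 1 : K) • (t ^ s * dl F t) := by
      clear ih
      induction s with
      | zero => simp
      | succ s ih =>
        rw [pow_succ, dl_mul, ih]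
        push_cast
        simp only [Algebra.smul_def, map_add, map_one]
        ring
    rw [Function.iterate_succ_apply, dl_mul, dl_iter_add, evalEval_add, hpow]
    have h1 : ((dl F)^[s] (dl F h * t ^ (s+1))).evalEval v.1 v.2 = 0 :=
      (Van.pow ht (s+1)).mul_left (dl F h) s (by omega)
    rw [h1, zero_add]
    have : h * ((s + 1 : K) • (t ^ s * dl F t)) = ((s+1 : K) • (h * dl F t)) * t ^ s := by
      simp only [Algebra.smul_def]
      ring
    rw [this, ih, evalEval_smul, evalEval_mul, Nat.factorial_succ]
    push_cast
    simp only [smul_eq_mul]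
    ring


/-- evaluation of all derivatives at all points -/
noncomputable def ev (F : K[X]) (S : Finset (K × K)) (M : ℕ) : K[X][Y] →ₗ[K] (S × Fin M → K) where
  toFun f vr := ((dl F)^[(vr.2 : ℕ)] f).evalEval vr.1.1.1 vr.1.1.2
  map_add' f g := by ext; simp
  map_smul' c f := by
    ext
    simp only [← Module.End.coe_pow, map_smul, evalEval_smul, Pi.smul_apply, RingHom.id_apply]

lemma mem_ker_ev {F : K[X]} {S : Finset (K × K)} {M : ℕ} {f : K[X][Y]} :
    f ∈ LinearMap.ker (ev F S M) ↔ ∀ v ∈ S, Van F M v f := by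
  rw [LinearMap.mem_ker]
  constructor
  · intro h v hv r hr
    exact congrFun h (⟨v, hv⟩, ⟨r, hr⟩)
  · intro h
    ext ⟨⟨v, hv⟩, ⟨r, hr⟩⟩
    exact h v hv r hr

/-- good points -/
def Good (F : K[X]) (w : K) (v : K × K) : Prop :=
  F.eval v.1 * F.eval v.2 = w ∧ F.eval v.1 ≠ 0 ∧ (derivative F).eval v.2 ≠ 0

lemma exists_separating (F : K[X]) (S : Finset (K × K)) (M : ℕ) (v : K × K) :
    ∃ h : K[X][Y], h.evalEval v.1 v.2 ≠ 0 ∧ ∀ v' ∈ S, v' ≠ v → Van F M v' h := by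
  classical
  have key : ∀ v' : K × K, ∃ l : K[X][Y], l.evalEval v'.1 v'.2 = 0 ∧
      (v' ≠ v → l.evalEval v.1 v.2 ≠ 0) := by
    intro v'
    by_cases h1 : v'.1 = v.1
    · refine ⟨(X - C v'.2).map C, by rw [evalEval_map_C]; simp, fun hne => ?_⟩
      rw [evalEval_map_C]
      simp only [eval_sub, eval_X, eval_C]
      intro h
      exact hne (Prod.ext h1 (sub_eq_zero.1 h).symm)
    · refine ⟨C (X - C v'.1), by rw [evalEval_C]; simp, fun hne => ?_⟩
      rw [evalEval_C]
      simp only [eval_sub, eval_X, eval_C]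
      intro h
      exact h1 (sub_eq_zero.1 h).symm
  choose l hl1 hl2 using key
  refine ⟨∏ v' ∈ S.erase v, l v' ^ M, ?_, ?_⟩
  · rw [evalEval_prod]
    refine Finset.prod_ne_zero_iff.2 fun v' hv' => ?_
    rw [evalEval_pow]
    exact pow_ne_zero _ (hl2 v' (Finset.ne_of_mem_erase hv'))
  · intro v' hv' hne
    rw [← Finset.mul_prod_erase _ _ (Finset.mem_erase.2 ⟨hne, hv'⟩)]
    exact (Van.pow (hl1 v') M).mul_right _

lemma exists_interp (F : K[X]) (w : K) (S : Finset (K × K)) (M : ℕ)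
    (hfac : ∀ s < M, (s.factorial : K) ≠ 0) (v : K × K) (hv : Good F w v) (c : ℕ → K) (k : ℕ)
    (hk : k ≤ M) :
    ∃ f : K[X][Y], (∀ v' ∈ S, v' ≠ v → Van F M v' f) ∧
      ∀ r < k, ((dl F)^[r] f).evalEval v.1 v.2 = c r := by
  obtain ⟨h, hh1, hh2⟩ := exists_separating F S M v
  set t : K[X][Y] := C (X - C v.1) with ht
  have ht0 : t.evalEval v.1 v.2 = 0 := by rw [ht, evalEval_C]; simp
  have ht1 : (dl F t).evalEval v.1 v.2 ≠ 0 := by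
    rw [ht, dl_C, evalEval_mul, evalEval_mul, evalEval_C, evalEval_C, evalEval_map_C]
    simpa using hv.2
  induction k with
  | zero =>
    refine ⟨0, fun v' _ _ r _ => ?_, by simp⟩
    rw [← Module.End.coe_pow, map_zero, evalEval_zero]
  | succ k ih =>
    obtain ⟨f, hf1, hf2⟩ := ih (by omega)
    set e := ((dl F)^[k] (h * t ^ k)).evalEval v.1 v.2 with he
    have he0 : e ≠ 0 := by
      rw [he, eval_dl_pow ht0]
      exact mul_ne_zero (mul_ne_zero (hfac k (by omega)) hh1) (pow_ne_zero _ ht1)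
    refine ⟨f + (h * t ^ k) * C (C ((c k - ((dl F)^[k] f).evalEval v.1 v.2) / e)), ?_, ?_⟩
    · intro v' hv' hne
      exact (hf1 v' hv' hne).add (((hh2 v' hv' hne).mul_right _).mul_right _)
    · intro r hr
      rw [dl_iter_add, dl_iter_mul_const _ _ _ _ (by rw [dl_C]; simp), evalEval_add, evalEval_mul,
        evalEval_CC]
      rcases Nat.lt_succ_iff_lt_or_eq.1 hr with hr | rfl
      · rw [hf2 r hr, ((Van.pow ht0 k).mul_left h) r hr, zero_mul, add_zero]
      · rw [← he]
        field_simp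
        ring

lemma ev_surjective (F : K[X]) (w : K) (S : Finset (K × K)) (M : ℕ)
    (hfac : ∀ s < M, (s.factorial : K) ≠ 0) (hS : ∀ v ∈ S, Good F w v) :
    Function.Surjective (ev F S M) := by
  classical
  intro u
  have := fun v : S => exists_interp F w S M hfac v.1 (hS v.1 v.2)
    (fun r => if h : r < M then u (v, ⟨r, h⟩) else 0) M le_rfl
  choose f hf1 hf2 using this
  refine ⟨∑ v, f v, ?_⟩
  rw [map_sum]
  ext ⟨v, r⟩
  rw [Finset.sum_apply, Finset.sum_eq_single v]
  · have := hf2 v r r.2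
    simpa [ev] using this
  · intro v' _ hne
    exact hf1 v' v.1 v.2 (fun h => hne (Subtype.ext h.symm)) r r.2
  · simp

lemma swap_G (F : K[X]) (w : K) : swap (G F w) = G F w := by
  rw [G, map_sub, map_mul, swap_C, swap_map_C, swap_C_C, mul_comm]

lemma G_mem_P {F : K[X]} (w : K) {D : ℕ} (hF : F.natDegree = D) : G F w ∈ P K D D := by
  refine Submodule.sub_mem _ ?_ ?_
  · exact P_mono (by omega) (by omega) (mul_mem_P (C_mem_P hF.le) (map_C_mem_P hF.le))
  · exact P_mono (by omega) (by omega) (C_mem_P (n := 0) (by simp))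

lemma natDegree_G {F : K[X]} (w : K) {D : ℕ} (hF : F.natDegree = D) (hD : 0 < D) :
    (G F w).natDegree = D := by
  refine le_antisymm (mem_P_iff.1 (G_mem_P w hF)).1 (le_natDegree_of_ne_zero ?_)
  have hF0 : F ≠ 0 := by rintro rfl; simp at hF; omega
  rw [G, coeff_sub, coeff_C_mul, coeff_map, coeff_C_of_ne_zero (by omega), sub_zero]
  refine mul_ne_zero hF0 ?_
  rw [Ne, C_eq_zero, ← hF, coeff_natDegree, leadingCoeff_eq_zero]
  exact hF0

lemma G_ne_zero {F : K[X]} (w : K) {D : ℕ} (hF : F.natDegree = D) (hD : 0 < D) : G F w ≠ 0 := by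
  intro h
  have := natDegree_G w hF hD
  rw [h] at this
  simp at this
  omega

lemma of_G_mul_mem_P {F : K[X]} (w : K) {D : ℕ} (hF : F.natDegree = D) (hD : 0 < D) {a b : ℕ}
    {h : K[X][Y]} (hh : G F w * h ∈ P K (a + D) (b + D)) : h ∈ P K a b := by
  by_cases h0 : h = 0
  · rw [h0]; exact Submodule.zero_mem _
  rw [mem_P_iff] at *
  have hG := G_ne_zero w hF hD
  rw [map_mul, swap_G, natDegree_mul hG h0, natDegree_mul hG (by simpa using h0),
    natDegree_G w hF hD] at hh
  omega

lemma eq_zero_of_G_dvd {F : K[X]} (w : K) {D : ℕ} (hF : F.natDegree = D) (hD : 0 < D) {a : ℕ}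
    {f : K[X][Y]} (hf : f ∈ P K a (D - 1)) (h : G F w ∣ f) : f = 0 := by
  obtain ⟨g, rfl⟩ := h
  by_contra hne
  have h1 := (mem_P_iff.1 hf).1
  rw [natDegree_mul (left_ne_zero_of_mul hne) (right_ne_zero_of_mul hne), natDegree_G w hF hD] at h1
  omega

/-- abstract dimension count -/
lemma dim_count {U E V W : Type*} [AddCommMonoid U] [AddCommMonoid E] [AddCommMonoid V]
    [AddCommMonoid W] [Module K U] [Module K E] [Module K V] [Module K W] [Module.Finite K U]
    [Module.Finite K V] [Module.Finite K W] (e : U →ₗ[K] E) (he : Function.Surjective e)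
    (ψ : V →ₗ[K] U) (θ : W →ₗ[K] V) (h1 : ∀ x, e (ψ x) = 0)
    (h2 : ∀ x, ψ x = 0 → ∃ y, θ y = x) :
    Module.finrank K E + Module.finrank K V ≤ Module.finrank K U + Module.finrank K W := by
  let _ := Module.addCommMonoidToAddCommGroup K (M := U)
  let _ := Module.addCommMonoidToAddCommGroup K (M := E)
  let _ := Module.addCommMonoidToAddCommGroup K (M := V)
  let _ := Module.addCommMonoidToAddCommGroup K (M := W)
  have h1' : LinearMap.range ψ ≤ LinearMap.ker e := by
    rintro _ ⟨x, rfl⟩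
    exact h1 x
  have h2' : LinearMap.ker ψ ≤ LinearMap.range θ := fun x hx => h2 x hx
  have c1 := e.finrank_range_add_finrank_ker
  have c2 := ψ.finrank_range_add_finrank_ker
  have c3 := Submodule.finrank_mono h1'
  have c4 := (Submodule.finrank_mono h2').trans (LinearMap.finrank_range_le θ)
  rw [LinearMap.range_eq_top.2 he, finrank_top] at c1
  omega

lemma exists_ker {U V : Type*} [AddCommMonoid U] [AddCommMonoid V] [Module K U] [Module K V]
    [Module.Finite K U] [Module.Finite K V] (f : V →ₗ[K] U)
    (h : Module.finrank K U < Module.finrank K V) : ∃ x, f x = 0 ∧ x ≠ 0 := by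
  let _ := Module.addCommMonoidToAddCommGroup K (M := U)
  let _ := Module.addCommMonoidToAddCommGroup K (M := V)
  exact Submodule.exists_mem_ne_zero_of_ne_bot (LinearMap.ker_ne_bot_of_finrank_lt (f := f) h)

instance (a b : ℕ) : Module.Free K (P K a b) :=
  Module.Free.of_equiv (LinearEquiv.ofBijective _ (Pcoeff_bij (K := K) a b)).symm

/-- Bezout -/
lemma bezout {F : K[X]} {w : K} {D : ℕ} (hF : F.natDegree = D) (hD : 0 < D)
    (hG : Prime (G F w)) (S : Finset (K × K)) (M : ℕ)
    (hfac : ∀ s < M, (s.factorial : K) ≠ 0) (hS : ∀ v ∈ S, Good F w v)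
    {A B : ℕ} {f : K[X][Y]} (hf : f ∈ P K A B) (hGf : ¬ G F w ∣ f) (hv : ∀ v ∈ S, Van F M v f) :
    S.card * M ≤ D * (A + B) := by
  classical
  have hsurj := ev_surjective F w S M hfac hS
  choose g hg using fun i : S × Fin M => hsurj (Pi.single i 1)
  obtain ⟨Z, hZ⟩ := exists_mem_P g
  set U := P K (Z + A + D) (Z + B + D) with hU
  let e : U →ₗ[K] (S × Fin M → K) := (ev F S M).comp U.subtype
  have he : Function.Surjective e := by
    intro u
    refine ⟨∑ i, u i • ⟨g i, P_mono (by omega) (by omega) (hZ i)⟩, ?_⟩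
    rw [map_sum]
    have : ∀ i, e (u i • ⟨g i, P_mono (by omega) (by omega) (hZ i)⟩) = Pi.single i (u i) := by
      intro i
      rw [map_smul]
      simp only [e, LinearMap.comp_apply, Submodule.subtype_apply, hg]
      rw [← Pi.single_smul]; simp
    simp only [this]
    exact Finset.univ_sum_single u
  have hGm := G_mem_P w hF
  let ψ₀ : (P K (Z + A) (Z + B) × P K (Z + D) (Z + D)) →ₗ[K] K[X][Y] :=
    LinearMap.coprod ((LinearMap.mulLeft K (G F w)).comp (Submodule.subtype _))
      ((LinearMap.mulLeft K f).comp (Submodule.subtype _))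
  have hψ₀ : ∀ x, ψ₀ x = G F w * x.1.1 + f * x.2.1 := fun x => by simp [ψ₀]
  let ψ : (P K (Z + A) (Z + B) × P K (Z + D) (Z + D)) →ₗ[K] U := ψ₀.codRestrict U (by
    intro x
    rw [hψ₀]
    refine Submodule.add_mem _ ?_ ?_
    · exact P_mono (by omega) (by omega) (mul_mem_P hGm x.1.2)
    · exact P_mono (by omega) (by omega) (mul_mem_P hf x.2.2))
  let θ : P K Z Z →ₗ[K] (P K (Z + A) (Z + B) × P K (Z + D) (Z + D)) :=
    LinearMap.prod
      (((LinearMap.mulLeft K (-f)).comp (Submodule.subtype _)).codRestrict _ (by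
        intro x
        exact P_mono (by omega) (by omega) (mul_mem_P (Submodule.neg_mem _ hf) x.2)))
      (((LinearMap.mulLeft K (G F w)).comp (Submodule.subtype _)).codRestrict _ (by
        intro x
        exact P_mono (by omega) (by omega) (mul_mem_P hGm x.2)))
  have h1 : ∀ x, e (ψ x) = 0 := by
    intro x
    have : ψ₀ x ∈ LinearMap.ker (ev F S M) := by
      rw [mem_ker_ev, hψ₀]
      intro v hvS
      exact (Van.G_mul (hS v hvS).1 M _).add ((hv v hvS).mul_right _)
    exact this
  have h2 : ∀ x, ψ x = 0 → ∃ y, θ y = x := by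
    rintro ⟨⟨h, hh⟩, ⟨k, hk⟩⟩ hx
    have hx0 : G F w * h + f * k = 0 := by
      have := congrArg Subtype.val hx
      have h3 := hψ₀ (⟨h, hh⟩, ⟨k, hk⟩)
      exact h3.symm.trans this
    have hdvd : G F w ∣ f * k := ⟨-h, by linear_combination hx0⟩
    obtain ⟨k', rfl⟩ := (hG.dvd_or_dvd hdvd).resolve_left hGf
    have hh' : h = -f * k' := mul_left_cancel₀ hG.ne_zero (by linear_combination hx0)
    refine ⟨⟨k', of_G_mul_mem_P w hF hD hk⟩, ?_⟩
    ext1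
    · exact Subtype.ext hh'.symm
    · rfl
  have : FiniteDimensional K U := by rw [hU]; infer_instance
  have c := dim_count e he ψ θ h1 h2
  rw [Module.finrank_prod, hU, finrank_P, finrank_P, finrank_P, finrank_P] at c
  simp only [Module.finrank_fintype_fun_eq_card, Fintype.card_prod, Fintype.card_coe,
    Fintype.card_fin] at c
  nlinarith

lemma irreducible_of_reverse {R : Type*} [CommRing R] [IsDomain R] {g : R[X]}
    (h0 : g.coeff 0 ≠ 0) (hdeg : 0 < g.natDegree) (h : Irreducible g.reverse) : Irreducible g := by
  have unit_of : ∀ a : R[X], a.coeff 0 ≠ 0 → IsUnit a.reverse → IsUnit a := by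
    intro a ha hu
    have h1 := natDegree_eq_zero_of_isUnit hu
    have h2 : a.natTrailingDegree = 0 := natTrailingDegree_eq_zero.2 (Or.inr ha)
    rw [reverse_natDegree, h2, Nat.sub_zero] at h1
    rw [eq_C_of_natDegree_eq_zero h1] at hu ⊢
    simpa using hu
  refine ⟨fun hu => ?_, ?_⟩
  · have := natDegree_eq_zero_of_isUnit hu
    omega
  · rintro a b rfl
    rw [mul_coeff_zero] at h0
    rw [reverse_mul_of_domain] at h
    rcases h.isUnit_or_isUnit rfl with h | h
    · exact Or.inl (unit_of a (left_ne_zero_of_mul h0) h)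
    · exact Or.inr (unit_of b (right_ne_zero_of_mul h0) h)

lemma prime_G {F : K[X]} {w : K} {D : ℕ} (hF : F.natDegree = D) (hD : 0 < D) (hw : w ≠ 0)
    (hsq : Squarefree F) : Prime (G F w) := by
  have hF0 : F ≠ 0 := by rintro rfl; simp at hF; omega
  have hFu : ¬ IsUnit F := fun h => by
    have := natDegree_eq_zero_of_isUnit h
    omega
  obtain ⟨q, hq, hqF⟩ := WfDvdMonoid.exists_irreducible_factor hFu hF0
  have hqw : ¬ q ∣ C w := fun h =>
    hq.not_isUnit (isUnit_of_dvd_unit h (isUnit_C.2 hw.isUnit))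
  have hdeg := natDegree_G w hF hD
  have hc0 : (G F w).coeff 0 = F * C (F.coeff 0) - C w := by
    rw [G, coeff_sub, coeff_C_mul, coeff_map, coeff_C_zero]
  have hcpos : ∀ n, 0 < n → (G F w).coeff n = F * C (F.coeff n) := by
    intro n hn
    rw [G, coeff_sub, coeff_C_mul, coeff_map, coeff_C_of_ne_zero (by omega), sub_zero]
  have hc0q : ¬ q ∣ (G F w).coeff 0 := by
    rw [hc0]
    intro h
    exact hqw ((dvd_sub_right (hqF.mul_right _)).1 h)
  have hc0' : (G F w).coeff 0 ≠ 0 := fun h => hc0q (h ▸ dvd_zero _)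
  have htr : (G F w).natTrailingDegree = 0 := natTrailingDegree_eq_zero.2 (Or.inr hc0')
  have hrdeg : (G F w).reverse.natDegree = D := by rw [reverse_natDegree, htr, hdeg, Nat.sub_zero]
  have hlcu : IsUnit (C (F.coeff D)) := by
    rw [isUnit_C, isUnit_iff_ne_zero, ← hF, coeff_natDegree]
    exact leadingCoeff_ne_zero.2 hF0
  refine (irreducible_of_reverse hc0' (by omega) ?_).prime
  have hqp : (Ideal.span {q}).IsPrime := (Ideal.span_singleton_prime hq.ne_zero).2 hq.prime
  refine irreducible_of_eisenstein_criterion hqp ?_ ?_ ?_ ?_ ?_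
  · rw [reverse_leadingCoeff, trailingCoeff, htr, Ideal.mem_span_singleton]
    exact hc0q
  · intro n hn
    have hn' : n < D := by
      rw [← hrdeg]; exact coe_lt_degree.1 hn
    rw [coeff_reverse, hdeg, revAt_le hn'.le, hcpos _ (by omega), Ideal.mem_span_singleton]
    exact hqF.mul_right _
  · rw [← natDegree_pos_iff_degree_pos, hrdeg]; exact hD
  · rw [coeff_zero_reverse, leadingCoeff, hdeg, hcpos D hD, Ideal.span_singleton_pow,
      Ideal.mem_span_singleton]
    intro h
    have h' : q ^ 2 ∣ F := (hlcu.dvd_mul_right).1 h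
    rw [pow_two] at h'
    exact hq.not_isUnit (hsq q h')
  · rw [isPrimitive_iff_isUnit_of_C_dvd]
    intro r hr
    rw [C_dvd_iff_dvd_coeff] at hr
    have h1 := hr 0
    rw [coeff_zero_reverse, leadingCoeff, hdeg, hcpos D hD] at h1
    have h1' : r ∣ F := (hlcu.dvd_mul_right).1 h1
    have h2 := hr D
    rw [coeff_reverse, hdeg, revAt_le le_rfl, Nat.sub_self, hc0] at h2
    have h3 : r ∣ C w := (dvd_sub_right (h1'.mul_right _)).1 h2
    exact isUnit_of_dvd_unit h3 (isUnit_C.2 hw.isUnit)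

/-- multiplication by the curve equation -/
noncomputable def mulG (F : K[X]) (w : K) (a b : ℕ) {D : ℕ} (hF : F.natDegree = D) :
    P K a b →ₗ[K] P K (a + D) (b + D) :=
  ((LinearMap.mulLeft K (G F w)).comp (Submodule.subtype _)).codRestrict _ (by
    intro x
    exact P_mono (by omega) (by omega) (mul_mem_P (G_mem_P w hF) x.2))

/-- linear algebra: existence of the auxiliary functions -/
lemma exists_aux (F : K[X]) (w : K) {D : ℕ} (hF : F.natDegree = D) (hD : 0 < D) (n m M : ℕ)
    (hM : M = D * n) (hn : 0 < n) (hm : m = 7 * D ^ 2 * n ^ 2)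
    {ι : Type} [Fintype ι] (hι : Fintype.card ι = D * (m + 1)) (α : ι → K[X][Y])
    (hα : ∀ i, α i ∈ P K m (D - 1)) :
    ∃ β : ι → K[X][Y], (∀ i, β i ∈ P K n (D - 1)) ∧ (∃ i, β i ≠ 0) ∧
      ∀ r < M, G F w ∣ ∑ i, (dl F)^[r] (α i) * β i := by
  classical
  let a := m + n + M * D
  let b := 2 * D + M * D
  let R₀ : ℕ → (ι → P K n (D - 1)) →ₗ[K] K[X][Y] := fun r =>
    ∑ i, (LinearMap.mulLeft K ((dl F)^[r] (α i))).comp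
      ((Submodule.subtype _).comp (LinearMap.proj i))
  have hR₀ : ∀ r β, R₀ r β = ∑ i, (dl F)^[r] (α i) * (β i : K[X][Y]) := by
    intro r β
    simp [R₀, LinearMap.sum_apply]
  let R : Fin M → (ι → P K n (D - 1)) →ₗ[K] P K (a + D) (b + D) := fun r =>
    (R₀ r).codRestrict _ (by
      intro β
      rw [hR₀]
      refine Submodule.sum_mem _ fun i _ => ?_
      have hr : (r : ℕ) * D ≤ M * D := Nat.mul_le_mul_right _ r.2.le
      refine P_mono ?_ ?_ (mul_mem_P (dl_iter_mem_P hF.le (hα i) r) (β i).2)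
      · simp only [a]; omega
      · simp only [b]; omega)
  let T : ((ι → P K n (D - 1)) × (Fin M → P K a b)) →ₗ[K] (Fin M → P K (a + D) (b + D)) :=
    LinearMap.pi fun r => LinearMap.coprod (R r) ((mulG F w a b hF).comp (LinearMap.proj r))
  have hT : ∃ x, T x = 0 ∧ x ≠ 0 := by
    apply exists_ker
    rw [Module.finrank_prod, Module.finrank_pi_fintype, Module.finrank_pi_fintype,
      Module.finrank_pi_fintype]
    simp only [finrank_P, Finset.sum_const, Finset.card_univ,
      Fintype.card_fin, hι, smul_eq_mul]
    have hab : (a + D + 1) * (b + D + 1) = (a + 1) * (b + 1) + D * (a + b + 2 + D) := by ring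
    rw [hab, mul_add, add_comm, add_lt_add_iff_right]
    simp only [a, b, hM, Nat.sub_add_cancel hD]
    have key : n * (m + n + D * n * D + (2 * D + D * n * D) + 2 + D) < (m + 1) * (n + 1) := by
      have e1 : 1 ≤ D := hD
      have e2 : n ≤ n ^ 2 := by nlinarith
      have e3 : n ^ 2 ≤ D ^ 2 * n ^ 2 := Nat.le_mul_of_pos_left _ (by positivity)
      have e4 : D * n ≤ D ^ 2 * n ^ 2 := by
        rw [← mul_pow]; nlinarith [Nat.mul_pos hD hn]
      have : n * (m + n + D * n * D + (2 * D + D * n * D) + 2 + D)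
        = n * m + n ^ 2 + 2 * (D ^ 2 * n ^ 2) + 3 * (D * n) + 2 * n := by ring
      rw [this]
      nlinarith
    have hDD : 0 < D * D := Nat.mul_pos hD hD
    calc D * n * (D * (m + n + D * n * D + (2 * D + D * n * D) + 2 + D))
        = (D * D) * (n * (m + n + D * n * D + (2 * D + D * n * D) + 2 + D)) := by ring
      _ < (D * D) * ((m + 1) * (n + 1)) := Nat.mul_lt_mul_of_pos_left key hDD
      _ = _ := by ring
  obtain ⟨⟨β, k⟩, hβ, hβ0⟩ := hT
  have hz : ∀ r : Fin M, R₀ r β + G F w * (k r : K[X][Y]) = 0 := by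
    intro r
    have h1 := congrArg Subtype.val (congrFun hβ r)
    exact h1
  refine ⟨fun i => β i, fun i => (β i).2, ?_, ?_⟩
  · by_contra h
    push Not at h
    have hb : β = 0 := funext fun i => Subtype.ext (h i)
    have hk : k = 0 := by
      funext r
      have := hz r
      rw [hb, map_zero, zero_add] at this
      exact Subtype.ext ((mul_eq_zero.1 this).resolve_left (G_ne_zero w hF hD))
    exact hβ0 (by rw [hb, hk]; rfl)
  · intro r hr
    rw [← hR₀]
    exact ⟨-(k ⟨r, hr⟩ : K[X][Y]), by linear_combination hz ⟨r, hr⟩⟩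

end basics

lemma dl_iter_sum {K : Type*} [Field K] (F : K[X]) (r : ℕ) {ι : Type*} (s : Finset ι)
    (f : ι → K[X][Y]) : (dl F)^[r] (∑ i ∈ s, f i) = ∑ i ∈ s, (dl F)^[r] (f i) := by
  rw [← Module.End.coe_pow, map_sum]

/-- the Stepanov bound with parameters -/
theorem stepanov (p : ℕ) [hp : Fact p.Prime] (F : (ZMod p)[X]) (w : ZMod p) {D : ℕ}
    (hF : F.natDegree = D) (hD : 0 < D) (hG : Prime (G F w)) (S : Finset (ZMod p × ZMod p))
    (hS : ∀ v ∈ S, Good F w v) (n m : ℕ) (hn : 0 < n) (hm : m = 7 * D ^ 2 * n ^ 2)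
    (h1 : D * (m + (D - 1)) < p) (h2 : D * (n + (D - 1)) < S.card) :
    S.card * (D * n) ≤ D * ((m + p * n) + ((D - 1) + p * (D - 1))) := by
  classical
  have hMp : D * n ≤ p := by
    have e1 : n ≤ m := by
      rw [hm]
      have : n ≤ n ^ 2 := by nlinarith
      have : n ^ 2 ≤ (7 * D ^ 2) * n ^ 2 := Nat.le_mul_of_pos_left _ (by positivity)
      omega
    have : D * n ≤ D * (m + (D - 1)) := Nat.mul_le_mul_left _ (by omega)
    omega
  have hfac : ∀ s < p, (s.factorial : ZMod p) ≠ 0 := by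
    intro s hs h
    rw [ZMod.natCast_eq_zero_iff, hp.out.dvd_factorial] at h
    omega
  let α : Fin D × Fin (m + 1) → (ZMod p)[X][Y] := fun ji => monomial (ji.1 : ℕ) (monomial (ji.2 : ℕ) 1)
  have hα : ∀ i, α i ∈ P (ZMod p) m (D - 1) := by
    rintro ⟨j, i⟩
    rw [mem_P_iff]
    simp only [α, swap_monomial_monomial]
    refine ⟨(natDegree_monomial_le _).trans (by omega), (natDegree_monomial_le _).trans (by omega)⟩
  have hαcoeff : ∀ (c : Fin D × Fin (m + 1) → ZMod p), ∑ i, c i • α i = 0 → ∀ i, c i = 0 := by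
    rintro c hc ⟨j, i⟩
    have := congrArg (fun f => (f.coeff (j : ℕ)).coeff (i : ℕ)) hc
    simp only [finsetSum_coeff, coeff_smul, coeff_zero] at this
    rw [Finset.sum_eq_single (j, i)] at this
    · simpa [α] using this
    · rintro ⟨j', i'⟩ _ hne
      simp only [α]
      rw [coeff_monomial]
      split_ifs with h
      · rw [coeff_monomial, if_neg, smul_zero]
        intro h'
        exact hne (Prod.ext (Fin.ext h) (Fin.ext h'))
      · simp
    · simp
  obtain ⟨β, hβ, ⟨i₀, hi₀⟩, hdvd⟩ := exists_aux F w hF hD n m (D * n) rfl hn hm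
    (ι := Fin D × Fin (m + 1)) (by simp) α hα
  set Φ := ∑ i, α i * β i ^ p with hΦ
  have hder : ∀ r, ∀ v : ZMod p × ZMod p, ((dl F)^[r] Φ).evalEval v.1 v.2
      = (∑ i, (dl F)^[r] (α i) * β i).evalEval v.1 v.2 := by
    intro r v
    rw [hΦ, dl_iter_sum, evalEval_finsetSum, evalEval_finsetSum]
    refine Finset.sum_congr rfl fun i _ => ?_
    rw [dl_iter_mul_const _ _ _ _ (dl_pow_p F p (β i)), evalEval_mul, evalEval_mul, evalEval_pow,
      ZMod.pow_card]
  have hGv : ∀ v ∈ S, ∀ f, G F w ∣ f → f.evalEval v.1 v.2 = 0 := by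
    rintro v hv _ ⟨g, rfl⟩
    exact Van.G_mul (hS v hv).1 1 g 0 one_pos
  have hΦG : ¬ G F w ∣ Φ := by
    intro hGΦ
    have hβv : ∀ v ∈ S, ∀ i, (β i).evalEval v.1 v.2 = 0 := by
      intro v hv
      set f := ∑ i, (β i).evalEval v.1 v.2 • α i with hf
      have hfP : f ∈ P (ZMod p) m (D - 1) :=
        Submodule.sum_mem _ fun i _ => Submodule.smul_mem _ _ (hα i)
      have hvan : Van F p v f := by
        intro r hr
        obtain ⟨g, hg⟩ := hGΦ
        have h3 := Van.G_mul (hS v hv).1 p g r hr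
        rw [← hg, hder, evalEval_finsetSum] at h3
        rw [hf, dl_iter_sum, evalEval_finsetSum, ← h3]
        refine Finset.sum_congr rfl fun i _ => ?_
        rw [← Module.End.coe_pow, map_smul, evalEval_smul, evalEval_mul, smul_eq_mul, mul_comm]
      have hGf : G F w ∣ f := by
        by_contra hcon
        have := bezout hF hD hG {v} p hfac (by simpa using hS v hv) hfP hcon (by simpa using hvan)
        simp only [Finset.card_singleton, one_mul] at this
        omega
      exact hαcoeff _ (eq_zero_of_G_dvd w hF hD hfP hGf)
    have hGβ : G F w ∣ β i₀ := by
      by_contra hcon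
      have := bezout hF hD hG S 1 (fun s hs => hfac s (hs.trans hp.out.one_lt)) hS (hβ i₀) hcon (by
        intro v hv r hr
        obtain rfl : r = 0 := by omega
        exact hβv v hv i₀)
      omega
    exact hi₀ (eq_zero_of_G_dvd w hF hD (hβ i₀) hGβ)
  refine bezout hF hD hG S (D * n) (fun s hs => hfac s (by omega)) hS ?_ hΦG ?_
  · refine Submodule.sum_mem _ fun i _ => mul_mem_P (hα i) (pow_mem_P (hβ i) p)
  · intro v hv r hr
    rw [hder]
    exact hGv v hv _ (hdvd r hr)

lemma bad_card (p : ℕ) [hp : Fact p.Prime] (F : (ZMod p)[X]) (w : ZMod p) (hw : w ≠ 0) {D : ℕ}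
    (hF : F.natDegree = D) (hD : 0 < D) (hF' : derivative F ≠ 0) (B : Finset (ZMod p × ZMod p))
    (hB : ∀ v ∈ B, F.eval v.1 * F.eval v.2 = w ∧ (derivative F).eval v.2 = 0) :
    B.card ≤ D * D := by
  classical
  have hsub : B ⊆ (derivative F).roots.toFinset.biUnion
      (fun y => (F - C (w / F.eval y)).roots.toFinset ×ˢ {y}) := by
    intro v hv
    obtain ⟨h1, h2⟩ := hB v hv
    have hy : F.eval v.2 ≠ 0 := by
      intro h; rw [h, mul_zero] at h1; exact hw h1.symm
    have hne : F - C (w / F.eval v.2) ≠ 0 := by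
      intro h
      have := congrArg natDegree h
      rw [natDegree_sub_C, natDegree_zero] at this
      omega
    simp only [Finset.mem_biUnion, Multiset.mem_toFinset, Finset.mem_product, Finset.mem_singleton]
    refine ⟨v.2, (mem_roots hF').2 h2, (mem_roots hne).2 ?_, rfl⟩
    rw [IsRoot, eval_sub, eval_C, ← h1]
    field_simp
    ring
  refine (Finset.card_le_card hsub).trans ?_
  refine (Finset.card_biUnion_le_card_mul _ _ D ?_).trans (Nat.mul_le_mul_right _ ?_)
  · intro y _
    rw [Finset.card_product, Finset.card_singleton, mul_one]
    refine (Multiset.toFinset_card_le _).trans ((card_roots' _).trans ?_)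
    rw [natDegree_sub_C, hF]
  · refine (Multiset.toFinset_card_le _).trans ((card_roots' _).trans ?_)
    exact (natDegree_derivative_le F).trans (by omega)

lemma good_card (p : ℕ) [hp : Fact p.Prime] (F : (ZMod p)[X]) (w : ZMod p) (hw : w ≠ 0) {D : ℕ}
    (hF : F.natDegree = D) (hD : 0 < D) (hsq : Squarefree F) (hpD : 16 * D ^ 4 ≤ p)
    (S : Finset (ZMod p × ZMod p)) (hS : ∀ v ∈ S, Good F w v) :
    (S.card : ℝ) ≤ p + 18 * D ^ 3 * Real.sqrt p := by
  have hG := prime_G hF hD hw hsq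
  set s := Nat.sqrt p with hs
  have hs1 : s * s ≤ p := Nat.sqrt_le p
  have hs2 : p < (s + 1) * (s + 1) := Nat.lt_succ_sqrt p
  set n := s / (4 * D ^ 2) with hn
  have hDD : 0 < 4 * D ^ 2 := by positivity
  have hs3 : 4 * D ^ 2 ≤ s := by
    rw [hs, Nat.le_sqrt]
    calc 4 * D ^ 2 * (4 * D ^ 2) = 16 * D ^ 4 := by ring
      _ ≤ p := hpD
  have hn0 : 0 < n := Nat.div_pos hs3 hDD
  have hn1 : 4 * D ^ 2 * n ≤ s := Nat.mul_div_le s _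
  have hn2 : s + 1 ≤ 4 * D ^ 2 * (n + 1) := Nat.lt_mul_div_succ s hDD
  have hn3 : s + 1 ≤ 8 * D ^ 2 * n := by nlinarith
  have hq : 16 * (D ^ 4 * n ^ 2) ≤ p := by
    have := Nat.mul_le_mul hn1 hn1
    calc 16 * (D ^ 4 * n ^ 2) = 4 * D ^ 2 * n * (4 * D ^ 2 * n) := by ring
      _ ≤ p := this.trans hs1
  have hd1 : D ^ 3 * n ^ 2 ≤ D ^ 4 * n ^ 2 :=
    Nat.mul_le_mul_right _ (Nat.pow_le_pow_right hD (by omega))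
  have hd2 : D * D ≤ D ^ 4 := by
    rw [← pow_two]; exact Nat.pow_le_pow_right hD (by omega)
  have hD4 : 0 < D ^ 4 := by positivity
  have hDm : D * (D - 1) ≤ D * D := Nat.mul_le_mul_left _ (by omega)
  have hr0 : 0 ≤ Real.sqrt p := Real.sqrt_nonneg _
  by_cases hc : S.card ≤ D * (n + (D - 1))
  · have h3 : D * n ≤ D ^ 4 * n ^ 2 := by
      have e1 : D ≤ D ^ 4 := Nat.le_self_pow (by omega) D
      have e2 : n ≤ n ^ 2 := Nat.le_self_pow (by omega) n
      exact Nat.mul_le_mul e1 e2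
    have h4 : S.card ≤ p := by
      rw [mul_add] at hc
      omega
    have h5 : (S.card : ℝ) ≤ p := by exact_mod_cast h4
    have : 0 ≤ 18 * (D : ℝ) ^ 3 * Real.sqrt p := by positivity
    linarith
  · push Not at hc
    have hst := stepanov p F w hF hD hG S hS n (7 * D ^ 2 * n ^ 2) hn0 rfl (by
      have : D * (7 * D ^ 2 * n ^ 2 + (D - 1)) = 7 * (D ^ 3 * n ^ 2) + D * (D - 1) := by ring
      omega) hc
    have hst2 : S.card * n ≤ 7 * D ^ 2 * n ^ 2 + p * n + 2 * D * p := by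
      have h3 : S.card * n ≤ (7 * D ^ 2 * n ^ 2 + p * n) + ((D - 1) + p * (D - 1)) := by
        refine Nat.le_of_mul_le_mul_left ?_ hD
        calc D * (S.card * n) = S.card * (D * n) := by ring
          _ ≤ _ := hst
      have h4 : (D - 1) + p * (D - 1) ≤ 2 * D * p := by
        have hp1 : 1 ≤ p := hp.out.one_lt.le
        have e1 : D - 1 ≤ D := by omega
        have e2 : p * (D - 1) ≤ p * D := Nat.mul_le_mul_left _ e1
        nlinarith
      omega
    set r := Real.sqrt p with hr
    have hrr : r * r = p := Real.mul_self_sqrt (by positivity)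
    have hr1 : r ≤ 8 * D ^ 2 * n := by
      have : r ≤ s + 1 := by
        rw [hr]
        refine Real.sqrt_le_iff.2 ⟨by positivity, ?_⟩
        have : (p : ℝ) ≤ (s + 1) * (s + 1) := by exact_mod_cast hs2.le
        nlinarith
      have h2 : ((s : ℝ) + 1) ≤ 8 * D ^ 2 * n := by exact_mod_cast hn3
      linarith
    have hr2 : 4 * (D : ℝ) ^ 2 * n ≤ r := by
      have : (s : ℝ) ≤ r := by
        rw [hr]
        refine Real.le_sqrt_of_sq_le ?_
        have : (s : ℝ) * s ≤ p := by exact_mod_cast hs1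
        nlinarith
      have h2 : 4 * (D : ℝ) ^ 2 * n ≤ s := by exact_mod_cast hn1
      linarith
    have hst3 : (S.card : ℝ) * n ≤ 7 * D ^ 2 * n ^ 2 + p * n + 2 * D * p := by exact_mod_cast hst2
    have hnr : (0 : ℝ) < n := by exact_mod_cast hn0
    have hD1 : (1 : ℝ) ≤ D := by exact_mod_cast hD
    have hD3 : (1 : ℝ) ≤ (D : ℝ) ^ 3 := one_le_pow₀ hD1
    refine le_of_mul_le_mul_right ?_ hnr
    have e1 : 7 * (D : ℝ) ^ 2 * n ^ 2 ≤ 2 * (D ^ 3 * r * n) := by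
      have : 7 * (D : ℝ) ^ 2 * n ^ 2 ≤ 2 * (r * n) := by
        have := mul_le_mul_of_nonneg_right hr2 hnr.le
        nlinarith [mul_nonneg (sq_nonneg (D : ℝ)) (sq_nonneg (n : ℝ))]
      have h2 : r * n ≤ D ^ 3 * r * n := by
        have := mul_le_mul_of_nonneg_right hD3 (mul_nonneg hr0 hnr.le)
        linarith
      linarith
    have e2 : 2 * (D : ℝ) * p ≤ 16 * (D ^ 3 * r * n) := by
      rw [← hrr]
      have := mul_le_mul_of_nonneg_left hr1 (mul_nonneg (by positivity : (0 : ℝ) ≤ 2 * D) hr0)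
      linarith
    linarith

theorem final_bound (p : ℕ) [hp : Fact p.Prime] (F : (ZMod p)[X]) (w : ZMod p) (hw : w ≠ 0) {D : ℕ}
    (hF : F.natDegree = D) (hD : 0 < D) (hsep : F.Separable) (V : Finset (ZMod p × ZMod p))
    (hV : ∀ v ∈ V, F.eval v.1 * F.eval v.2 = w) :
    (V.card : ℝ) ≤ ((p : ℝ) - 1) * (1 + (552 * D ^ 8) / Real.sqrt p) := by
  classical
  have hp2 : (2 : ℝ) ≤ p := by exact_mod_cast hp.out.two_le
  set r := Real.sqrt p with hr
  have hrr : r * r = p := Real.mul_self_sqrt (by positivity)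
  have hr0 : 0 < r := Real.sqrt_pos.2 (by linarith)
  have hr1 : 1 ≤ r := by nlinarith
  have hD1 : (1 : ℝ) ≤ D := by exact_mod_cast hD
  have key : r / 2 * (552 * (D : ℝ) ^ 8) ≤ ((p : ℝ) - 1) * ((552 * D ^ 8) / r) := by
    rw [mul_div_assoc', le_div_iff₀ hr0]
    have : r / 2 * r ≤ (p : ℝ) - 1 := by linarith
    have := mul_le_mul_of_nonneg_right this (by positivity : (0 : ℝ) ≤ 552 * (D : ℝ) ^ 8)
    linarith
  rw [mul_add, mul_one]
  by_cases hpD : 16 * D ^ 4 ≤ p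
  · have hF' : derivative F ≠ 0 := by
      intro h
      rw [Separable, h, isCoprime_zero_right] at hsep
      have := natDegree_eq_zero_of_isUnit hsep
      omega
    have h1 := good_card p F w hw hF hD hsep.squarefree hpD
      (V.filter fun v => (derivative F).eval v.2 ≠ 0) (by
        intro v hv
        rw [Finset.mem_filter] at hv
        refine ⟨hV v hv.1, ?_, hv.2⟩
        intro h
        have := hV v hv.1
        rw [h, zero_mul] at this
        exact hw this.symm)
    have h2 := bad_card p F w hw hF hD hF' (V.filter fun v => ¬ (derivative F).eval v.2 ≠ 0) (by
        intro v hv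
        rw [Finset.mem_filter, not_not] at hv
        exact ⟨hV v hv.1, hv.2⟩)
    have h3 := Finset.card_filter_add_card_filter_not (s := V) (fun v => (derivative F).eval v.2 ≠ 0)
    have h2' : (((V.filter fun v => ¬ (derivative F).eval v.2 ≠ 0).card : ℕ) : ℝ) ≤ D * D := by
      exact_mod_cast h2
    have h3' : (V.card : ℝ) = (V.filter fun v => (derivative F).eval v.2 ≠ 0).card
      + (V.filter fun v => ¬ (derivative F).eval v.2 ≠ 0).card := by exact_mod_cast h3.symm
    have e1 : (D : ℝ) ^ 3 ≤ D ^ 8 := pow_le_pow_right₀ hD1 (by omega)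
    have e2 : (D : ℝ) * D ≤ D ^ 8 := by
      rw [← pow_two]; exact pow_le_pow_right₀ hD1 (by omega)
    have e3 : (1 : ℝ) ≤ D ^ 8 := one_le_pow₀ hD1
    have e4 : (D : ℝ) ^ 3 * r ≤ D ^ 8 * r := mul_le_mul_of_nonneg_right e1 hr0.le
    have e5 : (D : ℝ) ^ 8 ≤ D ^ 8 * r := le_mul_of_one_le_right (by positivity) hr1
    linarith
  · push Not at hpD
    have h1 : V.card ≤ p * p := by
      have := Finset.card_le_univ V
      rwa [Fintype.card_prod, ZMod.card] at this
    have h1' : (V.card : ℝ) ≤ p * p := by exact_mod_cast h1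
    have h2 : (p : ℝ) ≤ 16 * D ^ 4 := by exact_mod_cast hpD.le
    have h3 : (p : ℝ) * p ≤ 256 * D ^ 8 := by
      have := mul_le_mul h2 h2 (by positivity) (by positivity)
      linarith [this]
    have e5 : (D : ℝ) ^ 8 ≤ D ^ 8 * r := le_mul_of_one_le_right (by positivity) hr1
    have : (0 : ℝ) ≤ D ^ 8 := by positivity
    linarith

end Stepanov



/-- **Estimate (5.3).** Fix `D`. There is a constant `C` depending only on `D` such that:
for every `F ∈ ℤ[T]` nonconstant of degree `D` with no multiple roots, every odd prime `ℓ`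
dividing neither the leading coefficient of `F` nor the discriminant of `T·F(T)` (of `F`
itself when `F(0) = 0`) — the latter condition, given `ℓ ∤ lc(F)`, being expressed by
requiring the reduction of `T·F(T)` (resp. `F`) mod `ℓ` to be separable — and every
integer `w` coprime to `ℓ`, the number `V_ℓ` of pairs `(v₁, v₂)` mod `ℓ` with
`gcd(v₁v₂, ℓ) = 1` and `F(v₁)F(v₂) ≡ w (mod ℓ)` satisfies
`V_ℓ ≤ (ℓ − 1)(1 + C/√ℓ)`, i.e. `φ(ℓ)·V_ℓ ≤ φ(ℓ)²(1 + C/√ℓ)`. -/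
theorem stmt17 (D : ℕ) (hD : 0 < D) :
    ∃ C : ℝ, ∀ F : Polynomial ℤ, F.natDegree = D →
      Squarefree (F.map (Int.castRingHom ℚ)) →
      ∀ ℓ : ℕ, ℓ.Prime → ℓ ≠ 2 →
        ¬ (ℓ : ℤ) ∣ F.leadingCoeff →
        Polynomial.Separable
          (if F.eval 0 = 0 then F.map (Int.castRingHom (ZMod ℓ))
           else Polynomial.X * F.map (Int.castRingHom (ZMod ℓ))) →
        ∀ w : ℤ, Int.gcd w (ℓ : ℤ) = 1 →
          (Set.ncard {v : ZMod ℓ × ZMod ℓ |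
              IsUnit v.1 ∧ IsUnit v.2 ∧
              (F.map (Int.castRingHom (ZMod ℓ))).eval v.1
                * (F.map (Int.castRingHom (ZMod ℓ))).eval v.2 = (w : ZMod ℓ)} : ℝ)
            ≤ ((ℓ : ℝ) - 1) * (1 + C / Real.sqrt ℓ) := by
  refine ⟨552 * (D : ℝ) ^ 8, ?_⟩
  intro F hFD _ ℓ hℓ _ hlc hsep w hw
  have : Fact ℓ.Prime := ⟨hℓ⟩
  have hsep' : (F.map (Int.castRingHom (ZMod ℓ))).Separable := by
    split_ifs at hsep with h
    · exact hsep
    · exact hsep.of_mul_right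
  have hdeg : (F.map (Int.castRingHom (ZMod ℓ))).natDegree = D := by
    rw [natDegree_map_of_leadingCoeff_ne_zero, hFD]
    rw [eq_intCast, Ne, ZMod.intCast_zmod_eq_zero_iff_dvd]
    exact hlc
  have hw0 : (w : ZMod ℓ) ≠ 0 := by
    rw [Ne, ZMod.intCast_zmod_eq_zero_iff_dvd]
    intro h
    have h1 : (ℓ : ℤ) ∣ (Int.gcd w (ℓ : ℤ) : ℤ) := Int.dvd_coe_gcd h dvd_rfl
    rw [hw] at h1
    have h2 : ℓ ∣ 1 := by exact_mod_cast h1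
    exact hℓ.one_lt.ne' (Nat.dvd_one.1 h2)
  rw [Set.ncard_eq_toFinset_card _ (Set.toFinite _)]
  refine Stepanov.final_bound ℓ (F.map (Int.castRingHom (ZMod ℓ))) (w : ZMod ℓ) hw0 hdeg hD hsep' _ ?_
  intro v hv
  rw [Set.Finite.mem_toFinset] at hv
  exact hv.2.2
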